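/- Let N₁ : ℝ → ℝ satisfy N₁(G) ≥ 2 for all large G and ∫₂^{N₁(G)} (−P(t)) dt = a·G + O(1) as G → ∞. Let g : ℝ → ℝ satisfy (i) g(T) − T ∼ (1−c)·T/ln T as T → ∞, and (ii) for every fixed l > 0, ∫_{g(T)}^{g(T+2l)} |ζ(1/2+it)|² dt = (1+o(1))·2l·ln T as T → ∞. Then for all positive integers x, y, z and every integer n ≥ 3, writing F = (xⁿ + yⁿ)/zⁿ, one has lim_{τ→∞} (1/τ)·{ [∫_{N₁(Fτ)}^{N₁(g(Fτ))} (−P(t)) dt] · [∫_{g(Fτ)}^{g(Fτ + 1/(a(1−c)))} |ζ(1/2+it)|² dt] } = F. -/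

import Mathlib

/-!
Write `J G = ∫₂^{N₁ G} (-P)`, so `J G = a G + O(1)`. As `P` is integrable on each `[2, b]`,
the first integral at `T` is `J (g T) - J T = a (g T - T) + O(1)`, and since
`g T - T ∼ (1 - c) T / log T → ∞` (here `c < 1` matters) it is asymptotic to
`a (1 - c) T / log T`. The second integral, with `2 l = 1 / (a (1 - c))`, is asymptotic to
`log T / (a (1 - c))`. The product is therefore asymptotic to `T`, and substituting `T = F τ`
and dividing by `τ` gives the limit `F`.
-/

open Filter Real Asymptotics MeasureTheory

noncomputable def pichar (t : ℝ) : ℝ := (Nat.primeCounting ⌊t⌋₊ : ℝ)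

noncomputable def P (t : ℝ) : ℝ := pichar t - ∫ u in (2:ℝ)..t, 1 / Real.log u

noncomputable def a : ℝ := Real.exp 4.5

noncomputable def c : ℝ := Real.eulerMascheroniConstant

noncomputable def Z (t : ℝ) : ℝ := ‖riemannZeta (1/2 + (t : ℂ) * Complex.I)‖ ^ 2

lemma a_pos : 0 < a := Real.exp_pos _

lemma one_sub_c_pos : 0 < 1 - c := by
  have := Real.eulerMascheroniConstant_lt_two_thirds
  unfold c
  linarith

lemma intervalIntegrable_neg_P {b : ℝ} (hb : 2 ≤ b) :
    IntervalIntegrable (fun t => -P t) volume 2 b := by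
  have h1 : Monotone pichar := fun s t hst => by
    unfold pichar
    exact_mod_cast Nat.monotone_primeCounting (Nat.floor_mono hst)
  have hlog : ContinuousOn (fun u : ℝ => 1 / Real.log u) (Set.uIcc 2 b) := by
    intro u hu
    rw [Set.uIcc_of_le hb] at hu
    have hu2 : (2 : ℝ) ≤ u := hu.1
    have : Real.log u ≠ 0 := (Real.log_pos (by linarith)).ne'
    exact (continuousAt_const.div (Real.continuousAt_log (by linarith)) this).continuousWithinAt
  have h2 : ContinuousOn (fun t : ℝ => ∫ u in (2:ℝ)..t, 1 / Real.log u) (Set.uIcc 2 b) :=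
    intervalIntegral.continuousOn_primitive_interval
      (hlog.integrableOn_compact isCompact_uIcc)
  exact (h1.intervalIntegrable.sub h2.intervalIntegrable).neg

lemma tendsto_increment :
    Tendsto (fun T : ℝ => (1 - c) * T / Real.log T) atTop atTop := by
  have h : Tendsto (fun T : ℝ => Real.log T / T) atTop (nhds 0) :=
    Real.isLittleO_log_id_atTop.tendsto_div_nhds_zero
  have h' : Tendsto (fun T : ℝ => Real.log T / T) atTop (nhdsWithin 0 (Set.Ioi 0)) := by
    refine tendsto_nhdsWithin_iff.2 ⟨h, ?_⟩
    filter_upwards [eventually_gt_atTop 1] with T hT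
    exact div_pos (Real.log_pos hT) (by linarith)
  refine (h'.inv_tendsto_nhdsGT_zero.const_mul_atTop one_sub_c_pos).congr fun T => ?_
  simp only [Pi.inv_apply, inv_div]
  ring

/-- The factor of the functional coming from the prime-number law. -/
lemma first_factor (N₁ g : ℝ → ℝ)
    (hN2 : ∀ᶠ G in atTop, 2 ≤ N₁ G)
    (hN : (fun G => (∫ t in (2:ℝ)..N₁ G, -P t) - a * G) =O[atTop] (fun _ => (1:ℝ)))
    (hg1 : (fun T => g T - T) ~[atTop] (fun T => (1 - c) * T / Real.log T)) :
    (fun T => ∫ t in N₁ T..N₁ (g T), -P t) ~[atTop]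
      (fun T => a * ((1 - c) * T / Real.log T)) := by
  have hdiff : Tendsto (fun T => g T - T) atTop atTop := hg1.symm.tendsto_atTop tendsto_increment
  have hg : Tendsto g atTop atTop := by
    refine (hdiff.atTop_add_atTop tendsto_id).congr fun T => ?_
    simp
  have hO := (hN.comp_tendsto hg).sub hN
  have ho : (fun _ : ℝ => (1:ℝ)) =o[atTop] (fun T => a * ((1 - c) * T / Real.log T)) := by
    refine (isLittleO_const_left.2 (Or.inr ?_))
    exact tendsto_norm_atTop_atTop.comp (tendsto_increment.const_mul_atTop a_pos)
  have hmain : (fun T => a * (g T - T)) ~[atTop] (fun T => a * ((1 - c) * T / Real.log T)) :=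
    (IsEquivalent.refl (u := fun _ : ℝ => a)).mul hg1
  refine (hmain.add_isLittleO (hO.trans_isLittleO ho)).congr_left ?_
  filter_upwards [hN2, hg.eventually hN2] with T h1 h2
  have := intervalIntegral.integral_interval_sub_left
    (intervalIntegrable_neg_P h2) (intervalIntegrable_neg_P h1)
  simp only [Pi.add_apply, Function.comp_apply]
  rw [← this]
  ring

/-- Corollary 1: the first `Pζ`-functional attains the value of every Fermat rational. -/
theorem stmt_8 (N₁ : ℝ → ℝ)
    (hN2 : ∀ᶠ G in atTop, 2 ≤ N₁ G)
    (hN : (fun G => (∫ t in (2:ℝ)..N₁ G, -P t) - a * G) =O[atTop] (fun _ => (1:ℝ)))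
    (g : ℝ → ℝ)
    (hg1 : (fun T => g T - T) ~[atTop] (fun T => (1 - c) * T / Real.log T))
    (hg2 : ∀ l : ℝ, 0 < l →
      (fun T => ∫ t in g T..g (T + 2 * l), Z t) ~[atTop] (fun T => 2 * l * Real.log T))
    (x y z n : ℕ) (hx : 0 < x) (hy : 0 < y) (hz : 0 < z) (hn : 3 ≤ n) :
    Tendsto (fun τ => (1 / τ) *
      ((∫ t in N₁ (((x ^ n + y ^ n : ℝ) / (z ^ n : ℝ)) * τ)..
          N₁ (g (((x ^ n + y ^ n : ℝ) / (z ^ n : ℝ)) * τ)), -P t) *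
        ∫ t in g (((x ^ n + y ^ n : ℝ) / (z ^ n : ℝ)) * τ)..
          g (((x ^ n + y ^ n : ℝ) / (z ^ n : ℝ)) * τ + 1 / (a * (1 - c))), Z t))
      atTop (nhds ((x ^ n + y ^ n : ℝ) / (z ^ n : ℝ))) := by
  have ha := a_pos
  have hc := one_sub_c_pos
  have hF : 0 < (x ^ n + y ^ n : ℝ) / (z ^ n : ℝ) := by positivity
  generalize (x ^ n + y ^ n : ℝ) / (z ^ n : ℝ) = F at hF ⊢
  have hl : 2 * (1 / (a * (1 - c)) / 2) = 1 / (a * (1 - c)) := by ring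
  have hZ := hg2 (1 / (a * (1 - c)) / 2) (by positivity)
  rw [hl] at hZ
  have hprod : (fun T => (∫ t in N₁ T..N₁ (g T), -P t) *
      ∫ t in g T..g (T + 1 / (a * (1 - c))), Z t) ~[atTop] (fun T => T) := by
    refine ((first_factor N₁ g hN2 hN hg1).mul hZ).congr_right ?_
    filter_upwards [eventually_gt_atTop 1] with T hT
    have := (Real.log_pos hT).ne'
    simp only [Pi.mul_apply]
    field_simp
  have hlim := (isEquivalent_iff_tendsto_one (eventually_ne_atTop 0)).1 hprod
  have hT : Tendsto (fun τ : ℝ => F * τ) atTop atTop := tendsto_id.const_mul_atTop hF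
  have h := (hlim.comp hT).const_mul F
  rw [mul_one] at h
  refine h.congr' ?_
  filter_upwards [eventually_gt_atTop 0] with τ hτ
  simp only [Function.comp_apply, Pi.div_apply]
  field_simp
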